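/- arXiv:2511.18377 — 5 statements merged into one kernel-verified Lean document; each statement's English description precedes it below -/
import Mathlib

section
/- Let p ≥ 1 and N ≥ 1, let H_i and H_f be N×N complex matrices all of whose entries are real, with H_f Hermitian, and let ψ₀ be a complex vector of dimension N all of whose entries are real. Then for all parameter vectors β, γ ∈ ℝ^p, the QAOA energy landscape is symmetric with respect to the origin: ⟨H_f⟩(−β, −γ) = ⟨H_f⟩(β, γ). -/
open Complex Matrix


/-- A single QAOA layer `exp(-(i β/2) H_i) * exp(-(i γ/2) H_f)`. -/
noncomputable def qaoaLayer {m : Type} [Fintype m] [DecidableEq m]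
    (Hi Hf : Matrix m m ℂ) (β γ : ℝ) : Matrix m m ℂ :=
  NormedSpace.exp ((-(Complex.I * (β : ℂ) / 2)) • Hi) *
    NormedSpace.exp ((-(Complex.I * (γ : ℂ) / 2)) • Hf)

/-- The QAOA output state `L(β_p,γ_p) ⋯ L(β_1,γ_1) ψ₀`. -/
noncomputable def qaoaState {m : Type} [Fintype m] [DecidableEq m] (p : ℕ)
    (Hi Hf : Matrix m m ℂ) (psi0 : m → ℂ) (β γ : Fin p → ℝ) : m → ℂ :=
  (((List.finRange p).reverse.map fun k => qaoaLayer Hi Hf (β k) (γ k)).prod).mulVec psi0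

/-- The QAOA energy landscape `⟨ψ(β,γ), H_f ψ(β,γ)⟩`. -/
noncomputable def qaoaEnergy {m : Type} [Fintype m] [DecidableEq m] (p : ℕ)
    (Hi Hf : Matrix m m ℂ) (psi0 : m → ℂ) (β γ : Fin p → ℝ) : ℂ :=
  ∑ x, (starRingEnd ℂ) (qaoaState p Hi Hf psi0 β γ x) *
    Hf.mulVec (qaoaState p Hi Hf psi0 β γ) x

theorem qaoa_exp_conj {m : Type} [Fintype m] [DecidableEq m] (A : Matrix m m ℂ)
    (hA : ∀ i j, (A i j).im = 0) (b : ℝ) :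
    NormedSpace.exp ((-(Complex.I * ((-b : ℝ) : ℂ) / 2)) • A) =
      (starRingEnd ℂ).mapMatrix (NormedSpace.exp ((-(Complex.I * (b : ℂ) / 2)) • A)) := by
  have key : ∀ B : Matrix m m ℂ, (starRingEnd ℂ).mapMatrix B = Bᴴᵀ := by
    intro B
    ext i j
    simp [Matrix.conjTranspose_apply]
  rw [key, ← Matrix.exp_conjTranspose, ← Matrix.exp_transpose]
  congr 1
  ext i j
  have h : (starRingEnd ℂ) (A i j) = A i j := Complex.conj_eq_iff_im.2 (hA i j)
  simp [Matrix.conjTranspose_apply, h]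

theorem qaoa_state_conj {m : Type} [Fintype m] [DecidableEq m] (p : ℕ)
    (Hi Hf : Matrix m m ℂ) (hi : ∀ i j, (Hi i j).im = 0) (hf : ∀ i j, (Hf i j).im = 0)
    (psi0 : m → ℂ) (h0 : ∀ i, (psi0 i).im = 0) (β γ : Fin p → ℝ) (x : m) :
    qaoaState p Hi Hf psi0 (-β) (-γ) x = (starRingEnd ℂ) (qaoaState p Hi Hf psi0 β γ x) := by
  have hl : ∀ b c : ℝ, qaoaLayer Hi Hf (-b) (-c) =
      (starRingEnd ℂ).mapMatrix (qaoaLayer Hi Hf b c) := by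
    intro b c
    unfold qaoaLayer
    rw [map_mul, qaoa_exp_conj Hi hi, qaoa_exp_conj Hf hf]
  have h0' : ∀ i, (starRingEnd ℂ) (psi0 i) = psi0 i := fun i => Complex.conj_eq_iff_im.2 (h0 i)
  have hprod : ((List.finRange p).reverse.map
        fun k => qaoaLayer Hi Hf ((-β) k) ((-γ) k)).prod =
      (starRingEnd ℂ).mapMatrix
        ((List.finRange p).reverse.map fun k => qaoaLayer Hi Hf (β k) (γ k)).prod := by
    rw [map_list_prod, List.map_map]
    simp only [Pi.neg_apply, hl]
    rfl
  unfold qaoaState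
  rw [hprod]
  simp only [Matrix.mulVec, dotProduct, map_sum, map_mul, h0', RingHom.mapMatrix_apply,
    Matrix.map_apply]

/-- **QAOA symmetry for QUBO problems.** If `H_i`, `H_f` have real entries, `H_f` is
Hermitian, and the initial state has real entries, then the energy landscape is
symmetric with respect to the origin: `⟨H_f⟩(-β, -γ) = ⟨H_f⟩(β, γ)`. -/
theorem qaoa_energy_symmetric (N p : ℕ) (hN : 1 ≤ N) (hp : 1 ≤ p)
    (Hi Hf : Matrix (Fin N) (Fin N) ℂ)
    (hHi_real : ∀ i j, (Hi i j).im = 0) (hHf_real : ∀ i j, (Hf i j).im = 0)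
    (hHf_herm : Hf.IsHermitian)
    (psi0 : Fin N → ℂ) (hpsi0_real : ∀ i, (psi0 i).im = 0)
    (β γ : Fin p → ℝ) :
    qaoaEnergy p Hi Hf psi0 (-β) (-γ) = qaoaEnergy p Hi Hf psi0 β γ := by
  have hs : ∀ i j, Hf i j = Hf j i := by
    intro i j
    have h1 := hHf_herm.apply i j
    rw [← h1]
    exact Complex.conj_eq_iff_im.2 (hHf_real j i)
  unfold qaoaEnergy
  simp only [Matrix.mulVec, dotProduct,
    qaoa_state_conj p Hi Hf hHi_real hHf_real psi0 hpsi0_real, Complex.conj_conj, Finset.mul_sum]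
  rw [Finset.sum_comm]
  refine Finset.sum_congr rfl fun i _ => Finset.sum_congr rfl fun j _ => ?_
  rw [hs j i]
  ring
end

section
/- Let n ≥ 1 and p ≥ 1, let a : Fin n → Fin n → ℝ, and consider the QAOA with initial Hamiltonian H_i = −∑_{i} X i, final Hamiltonian H_f = ∑_{i < j} (a i j) • (Z i * Z j) (only quadratic terms in the spins), and initial state ψ₀ = ψ₊. Then the energy landscape is periodic in each β variable with period π: for every index l, ⟨H_f⟩(β₁, …, β_l + π, …, β_p, γ) = ⟨H_f⟩(β, γ) for all β, γ ∈ ℝ^p. -/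
open Complex Matrix

/-- Pauli-X on qubit `i` of `n` qubits. -/
def PauliX (n : ℕ) (i : Fin n) : Matrix (Fin n → Fin 2) (Fin n → Fin 2) ℂ :=
  fun x y => if (∀ j, j ≠ i → x j = y j) ∧ x i ≠ y i then 1 else 0

/-- Pauli-Z on qubit `i` of `n` qubits. -/
def PauliZ (n : ℕ) (i : Fin n) : Matrix (Fin n → Fin 2) (Fin n → Fin 2) ℂ :=
  Matrix.diagonal fun x => (-1 : ℂ) ^ (x i : ℕ)

/-- Flip bit `i` of a bit string. -/
def bitFlip (n : ℕ) (i : Fin n) (x : Fin n → Fin 2) : Fin n → Fin 2 :=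
  Function.update x i (x i + 1)

lemma pauliX_cond_iff (n : ℕ) (i : Fin n) (x y : Fin n → Fin 2) :
    ((∀ j, j ≠ i → x j = y j) ∧ x i ≠ y i) ↔ y = bitFlip n i x := by
  constructor
  · rintro ⟨h1, h2⟩
    funext j
    by_cases hj : j = i
    · subst hj
      simp only [bitFlip, Function.update_self]
      revert h2
      generalize x j = a; generalize y j = b
      revert a b; decide
    · rw [bitFlip, Function.update_of_ne hj]
      exact (h1 j hj).symm
  · rintro rfl
    refine ⟨fun j hj => ?_, ?_⟩
    · rw [bitFlip, Function.update_of_ne hj]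
    · simp only [bitFlip, Function.update_self]
      generalize x i = a
      revert a; decide

lemma pauliX_eq (n : ℕ) (i : Fin n) :
    PauliX n i = fun x y => if y = bitFlip n i x then 1 else 0 := by
  funext x y
  rw [PauliX, if_congr (pauliX_cond_iff n i x y) rfl rfl]

lemma pauliX_mul_pauliX (n : ℕ) (i j : Fin n) :
    PauliX n i * PauliX n j
      = fun x y => if y = bitFlip n j (bitFlip n i x) then 1 else 0 := by
  funext x y
  rw [Matrix.mul_apply]
  simp only [pauliX_eq]
  rw [Finset.sum_eq_single (bitFlip n i x)]
  · simp
  · intro z _ hz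
    rw [if_neg hz, zero_mul]
  · intro h; exact absurd (Finset.mem_univ _) h

lemma bitFlip_comm (n : ℕ) (i j : Fin n) (x : Fin n → Fin 2) :
    bitFlip n j (bitFlip n i x) = bitFlip n i (bitFlip n j x) := by
  rcases eq_or_ne i j with rfl | h
  · rfl
  · simp only [bitFlip, Function.update_of_ne h, Function.update_of_ne (Ne.symm h),
      Function.update_self]
    exact Function.update_comm h _ _ x

lemma pauliX_commute (n : ℕ) (i j : Fin n) : Commute (PauliX n i) (PauliX n j) := by
  show _ * _ = _ * _
  rw [pauliX_mul_pauliX, pauliX_mul_pauliX]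
  funext x y
  rw [bitFlip_comm]

lemma pauliZ_commute (n : ℕ) (i j : Fin n) : Commute (PauliZ n i) (PauliZ n j) := by
  show _ * _ = _ * _
  simp only [PauliZ, Matrix.diagonal_mul_diagonal]
  have h : (fun x : Fin n → Fin 2 => (-1 : ℂ) ^ (x i : ℕ) * (-1) ^ (x j : ℕ))
      = fun x : Fin n → Fin 2 => (-1 : ℂ) ^ (x j : ℕ) * (-1) ^ (x i : ℕ) := by
    funext x; ring
  rw [h]

/-- The flip-all operator `∏ i, X i`. -/
def flipAll (n : ℕ) : Matrix (Fin n → Fin 2) (Fin n → Fin 2) ℂ :=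
  Finset.univ.noncommProd (PauliX n) fun a _ b _ _ => pauliX_commute n a b

/-- The parity operator `∏ i ∈ S, Z i`. -/
def ZProd (n : ℕ) (S : Finset (Fin n)) : Matrix (Fin n → Fin 2) (Fin n → Fin 2) ℂ :=
  S.noncommProd (PauliZ n) fun a _ b _ _ => pauliZ_commute n a b

/-- The uniform superposition state. -/
noncomputable def psiPlus (n : ℕ) : (Fin n → Fin 2) → ℂ :=
  fun _ => (((Real.sqrt 2)⁻¹ : ℝ) : ℂ) ^ n

lemma bitFlip_bitFlip (n : ℕ) (i : Fin n) (x : Fin n → Fin 2) :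
    bitFlip n i (bitFlip n i x) = x := by
  funext j
  by_cases hj : j = i
  · subst hj
    simp only [bitFlip, Function.update_self]
    generalize x j = a
    revert a; decide
  · simp only [bitFlip, Function.update_of_ne hj]

lemma pauliX_sq (n : ℕ) (i : Fin n) : PauliX n i * PauliX n i = 1 := by
  rw [pauliX_mul_pauliX]
  ext x y
  simp only [bitFlip_bitFlip, Matrix.one_apply]
  by_cases h : x = y
  · simp [h]
  · simp [h, Ne.symm h]

lemma exp_smul_of_sq_eq_one {m : Type} [Fintype m] [DecidableEq m]
    (A : Matrix m m ℂ) (hA : A * A = 1) (c : ℂ) :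
    NormedSpace.exp (c • A) =
      Complex.exp c • ((1 / 2 : ℂ) • (1 + A)) + Complex.exp (-c) • ((1 / 2 : ℂ) • (1 - A)) := by
  rw [NormedSpace.exp_eq_tsum ℂ]
  have hs : ∀ z : ℂ, HasSum (fun k : ℕ => z ^ k / (k.factorial : ℂ)) (Complex.exp z) := by
    intro z
    rw [Complex.exp_eq_exp_ℂ]
    exact NormedSpace.expSeries_div_hasSum_exp z
  have hpow : ∀ k : ℕ, A ^ k =
      (1 / 2 : ℂ) • (1 + A) + (-1 : ℂ) ^ k • ((1 / 2 : ℂ) • (1 - A)) := by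
    intro k
    induction k with
    | zero => simp only [pow_zero, one_smul]; module
    | succ k ih =>
      rw [pow_succ, ih, add_mul, smul_mul_assoc, smul_mul_assoc, smul_mul_assoc, add_mul,
        sub_mul, hA, one_mul, pow_succ]
      module
  refine HasSum.tsum_eq ?_
  convert ((hs c).smul_const ((1 / 2 : ℂ) • (1 + A))).add
    ((hs (-c)).smul_const ((1 / 2 : ℂ) • (1 - A))) using 1
  · rfl
  funext k
  rw [smul_pow, hpow k, neg_pow c k]
  module

lemma exp_pauliX (n : ℕ) (i : Fin n) :
    NormedSpace.exp ((I * (Real.pi : ℂ) / 2) • PauliX n i) = I • PauliX n i := by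
  rw [exp_smul_of_sq_eq_one _ (pauliX_sq n i)]
  have h1 : Complex.exp (I * (Real.pi : ℂ) / 2) = I := by
    rw [show I * (Real.pi : ℂ) / 2 = (Real.pi : ℂ) / 2 * I by ring, Complex.exp_pi_div_two_mul_I]
  rw [Complex.exp_neg, h1, Complex.inv_I]
  module

lemma pauliX_mul_pauliZ (n : ℕ) (i j : Fin n) :
    PauliX n i * PauliZ n j = (if j = i then (-1 : ℂ) else 1) • (PauliZ n j * PauliX n i) := by
  ext x y
  rw [PauliZ, Matrix.smul_apply, Matrix.mul_diagonal, Matrix.diagonal_mul, pauliX_eq]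
  by_cases hy : y = bitFlip n i x
  · subst hy
    by_cases hj : j = i
    · subst hj
      simp only [bitFlip, Function.update_self, if_true]
      generalize x j = a
      fin_cases a <;> simp
    · simp [bitFlip, Function.update_of_ne hj, hj]
  · simp [hy]

lemma pauliX_mulVec_psiPlus (n : ℕ) (i : Fin n) :
    (PauliX n i).mulVec (psiPlus n) = psiPlus n := by
  funext x
  simp [Matrix.mulVec, dotProduct, pauliX_eq, psiPlus]

/-- The partial mixer shift. -/
noncomputable def mixShift (n : ℕ) (S : Finset (Fin n)) :
    Matrix (Fin n → Fin 2) (Fin n → Fin 2) ℂ :=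
  NormedSpace.exp ((I * (Real.pi : ℂ) / 2) • ∑ i ∈ S, PauliX n i)

lemma mixShift_empty (n : ℕ) : mixShift n ∅ = 1 := by
  simp [mixShift, NormedSpace.exp_zero]

lemma mixShift_insert (n : ℕ) (S : Finset (Fin n)) (i : Fin n) (hi : i ∉ S) :
    mixShift n (insert i S) = (I • PauliX n i) * mixShift n S := by
  rw [mixShift, Finset.sum_insert hi, smul_add, Matrix.exp_add_of_commute, exp_pauliX, mixShift]
  exact ((Commute.sum_right _ _ _ fun j _ => pauliX_commute n i j).smul_left _).smul_right _

lemma mixShift_mul_pauliZ (n : ℕ) (S : Finset (Fin n)) (j : Fin n) :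
    mixShift n S * PauliZ n j =
      (if j ∈ S then (-1 : ℂ) else 1) • (PauliZ n j * mixShift n S) := by
  induction S using Finset.induction_on with
  | empty => simp [mixShift_empty]
  | insert i S hi ih =>
    rw [mixShift_insert n S i hi, mul_assoc, ih, mul_smul_comm, ← mul_assoc, smul_mul_assoc,
      pauliX_mul_pauliZ]
    simp only [smul_mul_assoc, mul_smul_comm, smul_smul, mul_assoc]
    congr 1
    by_cases h : j = i
    · subst h; simp [hi]
    · simp [h]

lemma mixShift_mulVec (n : ℕ) (S : Finset (Fin n)) :
    (mixShift n S).mulVec (psiPlus n) = I ^ S.card • psiPlus n := by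
  induction S using Finset.induction_on with
  | empty => simp [mixShift_empty]
  | insert i S hi ih =>
    rw [mixShift_insert n S i hi, ← Matrix.mulVec_mulVec, ih, Matrix.mulVec_smul,
      Matrix.smul_mulVec, pauliX_mulVec_psiPlus, smul_smul, Finset.card_insert_of_notMem hi,
      pow_succ]

lemma mixShift_commute_ZZ (n : ℕ) (i j : Fin n) :
    Commute (mixShift n Finset.univ) (PauliZ n i * PauliZ n j) := by
  have h := fun k => mixShift_mul_pauliZ n Finset.univ k
  simp only [Finset.mem_univ, if_true, neg_smul, one_smul] at h
  show _ * _ = _ * _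
  rw [← mul_assoc, h i, neg_mul, mul_assoc, h j, mul_neg, neg_neg, mul_assoc]

lemma commute_matrix_exp {m : Type} [Fintype m] [DecidableEq m] {A B : Matrix m m ℂ}
    (h : Commute A B) : Commute A (NormedSpace.exp B) :=
  h.exp_right

lemma list_prod_update {M ι : Type} [Monoid M] [DecidableEq ι] (U : M) (f g : ι → M) (l : ι)
    (hU : ∀ k, Commute U (f k)) (hl : g l = U * f l) (hne : ∀ k, k ≠ l → g k = f k)
    (L : List ι) (hL : L.Nodup) :
    (L.map g).prod = (if l ∈ L then U else 1) * (L.map f).prod := by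
  induction L with
  | nil => simp
  | cons k L ih =>
    rw [List.nodup_cons] at hL
    rw [List.map_cons, List.prod_cons, ih hL.2, List.map_cons, List.prod_cons]
    by_cases hk : k = l
    · subst hk
      simp [hL.1, hl, mul_assoc]
    · rw [hne k hk]
      by_cases hm : l ∈ L
      · simp only [hm, if_true, List.mem_cons, or_true]
        rw [← mul_assoc, ← mul_assoc, (hU k).eq]
      · simp [hm, Ne.symm hk]

/-- **QAOA periodicity for QUBO problems.** For the mixer `H_i = -∑ X i` and a final
Hamiltonian `H_f = ∑_{i < j} a i j • Z i Z j` with only quadratic spin terms, starting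
from the uniform superposition, the energy landscape is `π`-periodic in each `β`
variable. -/
theorem qaoa_energy_beta_periodic_qubo (n p : ℕ) (hn : 1 ≤ n) (hp : 1 ≤ p)
    (a : Fin n → Fin n → ℝ)
    (Hi Hf : Matrix (Fin n → Fin 2) (Fin n → Fin 2) ℂ)
    (hHi : Hi = -∑ i, PauliX n i)
    (hHf : Hf = ∑ i, ∑ j ∈ Finset.univ.filter (fun j => i < j),
      (a i j : ℂ) • (PauliZ n i * PauliZ n j))
    (l : Fin p) (β γ : Fin p → ℝ) :
    qaoaEnergy p Hi Hf (psiPlus n) (Function.update β l (β l + Real.pi)) γ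
      = qaoaEnergy p Hi Hf (psiPlus n) β γ := by
  set U := mixShift n Finset.univ with hUdef
  have hUHi : Commute U Hi := by
    rw [hHi]
    exact (((Commute.refl (∑ i, PauliX n i)).smul_left _).exp_left).neg_right
  have hUHf : Commute U Hf := by
    rw [hHf]
    exact Commute.sum_right _ _ _ fun i _ => Commute.sum_right _ _ _ fun j _ =>
      (mixShift_commute_ZZ n i j).smul_right _
  have hlayer : ∀ b g : ℝ, Commute U (qaoaLayer Hi Hf b g) := fun b g =>
    (commute_matrix_exp (hUHi.smul_right _)).mul_right (commute_matrix_exp (hUHf.smul_right _))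
  have hshift : ∀ b g : ℝ, qaoaLayer Hi Hf (b + Real.pi) g = U * qaoaLayer Hi Hf b g := by
    intro b g
    have e : (-(I * ((b + Real.pi : ℝ) : ℂ) / 2)) • Hi
        = (I * (Real.pi : ℂ) / 2) • (∑ i, PauliX n i) + (-(I * (b : ℂ) / 2)) • Hi := by
      rw [hHi]; push_cast; module
    rw [qaoaLayer, e, Matrix.exp_add_of_commute, qaoaLayer, hUdef, mixShift, mul_assoc]
    rw [hHi]
    exact ((Commute.refl (∑ i, PauliX n i)).neg_right.smul_left _).smul_right _
  have hstate : qaoaState p Hi Hf (psiPlus n) (Function.update β l (β l + Real.pi)) γ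
      = I ^ n • qaoaState p Hi Hf (psiPlus n) β γ := by
    have hprod := list_prod_update U (fun k => qaoaLayer Hi Hf (β k) (γ k))
      (fun k => qaoaLayer Hi Hf (Function.update β l (β l + Real.pi) k) (γ k)) l
      (fun k => hlayer _ _) (by simp only [Function.update_self]; exact hshift _ _)
      (fun k hk => by simp only [Function.update_of_ne hk])
      (List.finRange p).reverse (List.nodup_reverse.2 (List.nodup_finRange p))
    rw [qaoaState, hprod, if_pos (by simp)]
    have hc : Commute U
        ((List.finRange p).reverse.map fun k => qaoaLayer Hi Hf (β k) (γ k)).prod := by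
      apply Commute.list_prod_right
      intro M hM
      obtain ⟨k, -, rfl⟩ := List.mem_map.1 hM
      exact hlayer _ _
    rw [hc.eq, ← Matrix.mulVec_mulVec, hUdef, mixShift_mulVec, Matrix.mulVec_smul, qaoaState]
    simp
  have hI : (starRingEnd ℂ) (I ^ n) * I ^ n = 1 := by
    rw [map_pow, ← mul_pow, Complex.conj_I, neg_mul, Complex.I_mul_I, neg_neg, one_pow]
  rw [qaoaEnergy, qaoaEnergy, hstate]
  refine Finset.sum_congr rfl fun x _ => ?_
  rw [Matrix.mulVec_smul, Pi.smul_apply, Pi.smul_apply, smul_eq_mul, smul_eq_mul, map_mul]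
  linear_combination ((starRingEnd ℂ) (qaoaState p Hi Hf (psiPlus n) β γ x) *
    Hf.mulVec (qaoaState p Hi Hf (psiPlus n) β γ) x) * hI
end

section
/- Let n ≥ 1, let a : Fin n → Fin n → ℝ, and set H_i = −∑_{i} X i and H_f = ∑_{i < j} (a i j) • (Z i * Z j) (a final Hamiltonian with only quadratic terms in the spins). Then the flip-all operator ∏_{i : Fin n} X i commutes with every QAOA layer: for all real β, γ, (∏_i X i) * L(β,γ) = L(β,γ) * (∏_i X i), where L(β,γ) = Matrix.exp(−(I*β/2) • H_i) * Matrix.exp(−(I*γ/2) • H_f). -/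
open Complex Matrix

lemma prodX_mul_pauliZ (n : ℕ) (j : Fin n) (S : Finset (Fin n))
    (hS : (S : Set (Fin n)).Pairwise (Function.onFun Commute (PauliX n))) :
    S.noncommProd (PauliX n) hS * PauliZ n j
      = (if j ∈ S then (-1 : ℂ) else 1) • (PauliZ n j * S.noncommProd (PauliX n) hS) := by
  induction S using Finset.induction_on with
  | empty => simp
  | insert i S hi ih =>
    rw [Finset.noncommProd_insert_of_notMem _ _ _ _ hi, mul_assoc, ih, mul_smul_comm,
      ← mul_assoc, pauliX_mul_pauliZ, smul_mul_assoc, smul_smul, mul_assoc]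
    congr 1
    by_cases h : j = i
    · subst h; simp [hi]
    · simp [h]

lemma flipAll_mul_pauliZ (n : ℕ) (j : Fin n) :
    flipAll n * PauliZ n j = -(PauliZ n j * flipAll n) := by
  have h := prodX_mul_pauliZ n j Finset.univ (fun a _ b _ _ => pauliX_commute n a b)
  rw [if_pos (Finset.mem_univ j), neg_one_smul] at h
  exact h

lemma flipAll_commute_ZZ (n : ℕ) (i j : Fin n) :
    Commute (flipAll n) (PauliZ n i * PauliZ n j) := by
  show _ * _ = _ * _
  rw [← mul_assoc, flipAll_mul_pauliZ, neg_mul, mul_assoc, flipAll_mul_pauliZ, mul_neg, neg_neg,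
    mul_assoc]

lemma flipAll_commute_pauliX (n : ℕ) (i : Fin n) : Commute (flipAll n) (PauliX n i) :=
  (Finset.noncommProd_commute _ _ _ _ fun j _ => pauliX_commute n i j).symm

/-- **The flip-all operator commutes with every QAOA layer** when the final Hamiltonian
has only quadratic spin terms. -/
theorem flipAll_commute_qaoaLayer (n : ℕ) (hn : 1 ≤ n) (a : Fin n → Fin n → ℝ)
    (Hi Hf : Matrix (Fin n → Fin 2) (Fin n → Fin 2) ℂ)
    (hHi : Hi = -∑ i, PauliX n i)
    (hHf : Hf = ∑ i, ∑ j ∈ Finset.univ.filter (fun j => i < j),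
      (a i j : ℂ) • (PauliZ n i * PauliZ n j))
    (β γ : ℝ) :
    flipAll n * qaoaLayer Hi Hf β γ = qaoaLayer Hi Hf β γ * flipAll n := by
  have h1 : Commute (flipAll n) Hi := by
    rw [hHi]
    exact (Commute.sum_right _ _ _ fun i _ => flipAll_commute_pauliX n i).neg_right
  have h2 : Commute (flipAll n) Hf := by
    rw [hHf]
    exact Commute.sum_right _ _ _ fun i _ => Commute.sum_right _ _ _ fun j _ =>
      (flipAll_commute_ZZ n i j).smul_right _
  exact ((h1.smul_right _).exp_right).mul_right ((h2.smul_right _).exp_right)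
end

section
/- For every n ≥ 1, the matrix exponential of −(I*π/2) • ∑_{k : Fin n} X k equals (−I)^n • ∏_{k : Fin n} X k, i.e., e^{−i(π/2)Σσx} coincides, up to the global phase (−i)^n, with the operator that flips every qubit. -/
open Complex Matrix

/-- The functional calculus of an involution, as a ring homomorphism from `ℂ × ℂ`. -/
noncomputable def involHom {m : Type*} [Fintype m] [DecidableEq m] (A : Matrix m m ℂ)
    (hA : A * A = 1) : ℂ × ℂ →+* Matrix m m ℂ where
  toFun p := ((p.1 + p.2) / 2) • (1 : Matrix m m ℂ) + ((p.1 - p.2) / 2) • A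
  map_one' := by simp
  map_zero' := by simp
  map_add' p q := by
    simp only [Prod.fst_add, Prod.snd_add]
    module
  map_mul' p q := by
    simp only [Prod.fst_mul, Prod.snd_mul, add_mul, mul_add, smul_mul_assoc, mul_smul_comm,
      one_mul, mul_one, hA]
    module

lemma exp_invol {m : Type*} [Fintype m] [DecidableEq m] (A : Matrix m m ℂ)
    (hA : A * A = 1) :
    NormedSpace.exp ((-(Complex.I * (Real.pi : ℂ) / 2)) • A) = (-Complex.I) • A := by
  have hc : Continuous (involHom A hA) := by
    show Continuous fun p : ℂ × ℂ =>
      ((p.1 + p.2) / 2) • (1 : Matrix m m ℂ) + ((p.1 - p.2) / 2) • A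
    fun_prop
  have happ : ∀ p : ℂ × ℂ, involHom A hA p =
      ((p.1 + p.2) / 2) • (1 : Matrix m m ℂ) + ((p.1 - p.2) / 2) • A := fun _ => rfl
  have h := open scoped Matrix.Norms.Operator in
    NormedSpace.map_exp (involHom A hA) hc
      (-(Complex.I * (Real.pi : ℂ) / 2), Complex.I * (Real.pi : ℂ) / 2)
  have e1 : Complex.exp (Complex.I * (Real.pi : ℂ) / 2) = Complex.I := by
    rw [mul_comm, mul_div_right_comm, Complex.exp_pi_div_two_mul_I]
  rw [happ, happ, Prod.fst_exp, Prod.snd_exp, ← Complex.exp_eq_exp_ℂ, Complex.exp_neg, e1,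
    Complex.inv_I] at h
  have l : ∀ c : ℂ, ((-c + c) / 2) • (1 : Matrix m m ℂ) + ((-c - c) / 2) • A = (-c) • A := by
    intro c; module
  rw [l, l] at h
  exact h.symm

lemma noncommProd_smul_const {ι M : Type*} [Ring M] [Algebra ℂ M] (c : ℂ)
    (f : ι → M) (s : Finset ι) (h h') :
    s.noncommProd (fun k => c • f k) h = c ^ s.card • s.noncommProd f h' := by
  classical
  induction s using Finset.induction_on with
  | empty => simp
  | insert a s ha ih =>
    rw [Finset.noncommProd_insert_of_notMem _ _ _ _ ha,
      Finset.noncommProd_insert_of_notMem _ _ _ _ ha, ih, Finset.card_insert_of_notMem ha,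
      smul_mul_smul_comm, pow_succ']

/-- **`exp(-i(π/2) ∑ σx)` is the flip-all operator up to the global phase `(-i)^n`.** -/
theorem exp_mixer_pi_half_eq_flipAll (n : ℕ) (hn : 1 ≤ n) :
    NormedSpace.exp ((-(Complex.I * (Real.pi : ℂ) / 2)) • ∑ k, PauliX n k)
      = ((-Complex.I) ^ n) • flipAll n := by
  rw [Finset.smul_sum, Matrix.exp_sum_of_commute _ _
    (fun a _ b _ _ => ((pauliX_commute n a b).smul_left _).smul_right _)]
  have key : ∀ k, NormedSpace.exp ((-(Complex.I * (Real.pi : ℂ) / 2)) • PauliX n k)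
      = (-Complex.I) • PauliX n k := fun k => exp_invol _ (pauliX_sq n k)
  refine (Finset.noncommProd_congr rfl (fun k _ => key k) _).trans ?_
  refine (noncommProd_smul_const _ _ _ _ (fun a _ b _ _ => pauliX_commute n a b)).trans ?_
  simp [flipAll]
end

section
/- CNOT-chain decomposition of the multi-qubit phase gate R_{Z^k}: let k ≥ 2, let t : Fin k be the last qubit, and for c ≠ t let CNOT(c,t) be the CNOT gate with control c and target t. Then for every real θ, Matrix.exp(−(I*θ/2) • ∏_{i : Fin k} Z i) = (∏_{c ≠ t} CNOT(c,t)) * D(θ) * (∏_{c ≠ t} CNOT(c,t)), where D(θ) is the diagonal matrix with diagonal entry at x equal to exp(−(I*θ/2) * (−1)^(x t)) (the gate Rz(θ) acting on qubit t), and the products over c are well defined because CNOT gates sharing the same target commute. -/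
open Complex Matrix

/-- The CNOT gate with control `c` and target `t`: its `(y, x)` entry is `1` exactly when
`y` is `x` with the target bit replaced by `x t + x c` (XOR). -/
def CNOTgate (k : ℕ) (c t : Fin k) : Matrix (Fin k → Fin 2) (Fin k → Fin 2) ℂ :=
  fun y x => if y = Function.update x t (x t + x c) then 1 else 0

/-- The action of `CNOT(c,t)` on bit strings. -/
def cnotFun (k : ℕ) (c t : Fin k) (x : Fin k → Fin 2) : Fin k → Fin 2 :=
  Function.update x t (x t + x c)

lemma CNOTgate_mul (k : ℕ) (c c' t : Fin k) :
    CNOTgate k c t * CNOTgate k c' t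
      = fun y x => if y = cnotFun k c t (cnotFun k c' t x) then 1 else 0 := by
  funext y x
  simp only [CNOTgate, Matrix.mul_apply, cnotFun]
  rw [Finset.sum_eq_single (Function.update x t (x t + x c'))]
  · simp
  · intro z _ hz
    rw [if_neg hz, mul_zero]
  · intro h; exact absurd (Finset.mem_univ _) h

lemma cnotFun_comm (k : ℕ) (c c' t : Fin k) (hc : c ≠ t) (hc' : c' ≠ t)
    (x : Fin k → Fin 2) :
    cnotFun k c t (cnotFun k c' t x) = cnotFun k c' t (cnotFun k c t x) := by
  simp only [cnotFun, Function.update_self, Function.update_of_ne hc,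
    Function.update_of_ne hc', Function.update_idem]
  rw [add_right_comm]

lemma CNOTgate_commute (k : ℕ) (c c' t : Fin k) (hc : c ≠ t) (hc' : c' ≠ t) :
    Commute (CNOTgate k c t) (CNOTgate k c' t) := by
  show _ * _ = _ * _
  rw [CNOTgate_mul, CNOTgate_mul]
  funext y x
  rw [cnotFun_comm k c c' t hc hc']

/-- The chain of CNOT gates `∏_{c ≠ t} CNOT(c, t)`, well defined since CNOT gates sharing
the same target commute. -/
def cnotChain (k : ℕ) (t : Fin k) : Matrix (Fin k → Fin 2) (Fin k → Fin 2) ℂ :=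
  (Finset.univ.filter fun c => c ≠ t).noncommProd (fun c => CNOTgate k c t)
    fun a ha b hb _ => CNOTgate_commute k a b t
      (by simpa using ha) (by simpa using hb)

lemma sgn_add (a b : Fin 2) :
    (-1 : ℂ) ^ ((a + b : Fin 2) : ℕ) = (-1) ^ (a : ℕ) * (-1) ^ (b : ℕ) := by
  fin_cases a <;> fin_cases b <;> simp

lemma sgn_sum {ι : Type*} (S : Finset ι) (x : ι → Fin 2) :
    (-1 : ℂ) ^ ((∑ i ∈ S, x i : Fin 2) : ℕ) = ∏ i ∈ S, (-1 : ℂ) ^ (x i : ℕ) := by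
  classical
  induction S using Finset.induction_on with
  | empty => simp
  | insert a S ha ih => rw [Finset.sum_insert ha, Finset.prod_insert ha, sgn_add, ih]

lemma ZProd_eq_aux (n : ℕ) (S : Finset (Fin n))
    (h : (S : Set (Fin n)).Pairwise (Function.onFun Commute (PauliZ n))) :
    S.noncommProd (PauliZ n) h
      = Matrix.diagonal fun x => ∏ i ∈ S, (-1 : ℂ) ^ (x i : ℕ) := by
  induction S using Finset.induction_on with
  | empty => simp
  | insert a S ha ih =>
    rw [Finset.noncommProd_insert_of_notMem _ _ _ _ ha, ih, PauliZ,
      Matrix.diagonal_mul_diagonal]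
    simp only [Finset.prod_insert ha]

lemma ZProd_eq (n : ℕ) (S : Finset (Fin n)) :
    ZProd n S = Matrix.diagonal fun x => ∏ i ∈ S, (-1 : ℂ) ^ (x i : ℕ) :=
  ZProd_eq_aux n S _

lemma CNOTgate_apply (k : ℕ) (c t : Fin k) (y x : Fin k → Fin 2) :
    CNOTgate k c t y x = if y = Function.update x t (x t + x c) then 1 else 0 := rfl

lemma cnotProd_eq (k : ℕ) (t : Fin k) (S : Finset (Fin k)) (hS : t ∉ S)
    (h : (S : Set (Fin k)).Pairwise
      (Function.onFun Commute fun c => CNOTgate k c t)) :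
    S.noncommProd (fun c => CNOTgate k c t) h
      = Matrix.of fun y x => if y = Function.update x t (x t + ∑ c ∈ S, x c) then 1 else 0 := by
  induction S using Finset.induction_on with
  | empty =>
    ext y x
    simp [Matrix.one_apply]
  | insert a S ha ih =>
    have hat : a ≠ t := fun e => hS (by simp [e])
    rw [Finset.noncommProd_insert_of_notMem _ _ _ _ ha,
      ih (fun e => hS (Finset.mem_insert_of_mem e))]
    ext y x
    simp only [Matrix.mul_apply, CNOTgate_apply, Matrix.of_apply]
    rw [Finset.sum_eq_single (Function.update x t (x t + ∑ c ∈ S, x c))]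
    · simp only [Function.update_self, Function.update_of_ne hat, Function.update_idem,
        if_true, mul_one, Finset.sum_insert ha]
      rw [add_assoc, add_comm (∑ c ∈ S, x c)]
    · intro z _ hz
      rw [if_neg hz, mul_zero]
    · intro h; exact absurd (Finset.mem_univ _) h

/-- **CNOT-chain decomposition of the multi-qubit phase gate `R_{Z^k}`**, with target the
last qubit. -/
theorem RZk_cnot_decomposition (k : ℕ) (hk : 2 ≤ k) (t : Fin k) (ht : (t : ℕ) = k - 1)
    (θ : ℝ) :
    NormedSpace.exp ((-(Complex.I * (θ : ℂ) / 2)) • ZProd k Finset.univ)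
      = cnotChain k t
        * Matrix.diagonal (fun x : Fin k → Fin 2 =>
            Complex.exp (-(Complex.I * (θ : ℂ) / 2) * (-1) ^ (x t : ℕ)))
        * cnotChain k t := by
  set S : Finset (Fin k) := Finset.univ.filter fun c => c ≠ t with hSdef
  have hS : t ∉ S := by simp [hSdef]
  have hU : insert t S = Finset.univ := by
    ext c
    by_cases h : c = t <;> simp [hSdef, h]
  have hchain : cnotChain k t
      = Matrix.of fun y x => if y = Function.update x t (x t + ∑ c ∈ S, x c) then 1 else 0 :=
    cnotProd_eq k t S hS _
  have hinv : ∀ x : Fin k → Fin 2,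
      Function.update (Function.update x t (x t + ∑ c ∈ S, x c)) t
        (Function.update x t (x t + ∑ c ∈ S, x c) t
          + ∑ c ∈ S, Function.update x t (x t + ∑ c ∈ S, x c) c) = x := by
    intro x
    have h1 : ∑ c ∈ S, Function.update x t (x t + ∑ c ∈ S, x c) c = ∑ c ∈ S, x c := by
      refine Finset.sum_congr rfl fun c hc => ?_
      rw [Function.update_of_ne]
      rintro rfl
      exact hS hc
    have h2 : ∀ a b : Fin 2, a + b + b = a := by decide
    rw [h1, Function.update_self, Function.update_idem, h2, Function.update_eq_self]
  rw [ZProd_eq, ← Matrix.diagonal_smul, Matrix.exp_diagonal, hchain]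
  ext y x
  rw [Matrix.mul_apply, Finset.sum_eq_single (Function.update x t (x t + ∑ c ∈ S, x c))]
  · rw [Matrix.mul_diagonal, Matrix.of_apply, Matrix.of_apply, hinv, if_pos rfl, mul_one, Function.update_self, sgn_add, sgn_sum,
      ← Finset.prod_insert (f := fun c => (-1 : ℂ) ^ (x c : ℕ)) hS, hU, Matrix.diagonal_apply]
    by_cases h : y = x
    · subst h
      simp [Pi.coe_exp, Complex.exp_eq_exp_ℂ]
    · simp [h]
  · intro z _ hz
    rw [Matrix.of_apply _ z x, if_neg hz, mul_zero]
  · intro h; exact absurd (Finset.mem_univ _) h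
end
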